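/- arXiv:math/0104131 — 3 statements merged into one kernel-verified Lean document; each statement's English description precedes it below -/
import Mathlib

section
/- Let m be a positive integer. Then for every function x : ℕ → ℚ, I_m(x) = I_{2m}(y) + (1/2)·I_m(z), where y : ℕ → ℚ is defined by y(r) := 0 for odd r and y(r) := x(r/2) for even r, and z : ℕ → ℚ is defined by z(r) := x(r) for odd r and z(r) := 0 for even r. -/
open Finset

/-- Cycle index of the regular cyclic group of order `n`:
`I_n(x) = (1/n) * ∑_{r | n} φ(r) * x(r)^(n/r)`. -/
def cycleIndex (n : ℕ) (x : ℕ → ℚ) : ℚ :=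
  (1 / (n : ℚ)) * ∑ r ∈ n.divisors, (Nat.totient r : ℚ) * x r ^ (n / r)

/-!
The argument works with any prime `p` in place of `2`. The terms of `I_{pm}(y)` at the divisors of
`p * m` prime to `p` vanish, and substituting `r = p * d` in the others gives
`(1 / (p * m)) * ∑_{d ∣ m} φ(p * d) * x(d) ^ (m / d)`. Now `φ(p * d)` is `p * φ(d)` if `p ∣ d` and
`p * φ(d) - φ(d)` otherwise, so this falls short of `I_m(x)` by exactly `(1 / p) * I_m(z)`.
-/

theorem image_mul_left_divisors {k : ℕ} (hk : k ≠ 0) (m : ℕ) :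
    m.divisors.image (k * ·) = {r ∈ (k * m).divisors | k ∣ r} := by
  ext r
  simp only [mem_image, mem_filter, Nat.mem_divisors]
  constructor
  · rintro ⟨d, ⟨hdm, hm⟩, rfl⟩
    exact ⟨⟨Nat.mul_dvd_mul_left k hdm, mul_ne_zero hk hm⟩, dvd_mul_right k d⟩
  · rintro ⟨⟨hdvd, hkm⟩, d, rfl⟩
    exact ⟨d, ⟨Nat.dvd_of_mul_dvd_mul_left (Nat.pos_of_ne_zero hk) hdvd, right_ne_zero_of_mul hkm⟩,
      rfl⟩

theorem sum_divisors_mul_filter_dvd {M : Type*} [AddCommMonoid M] {k : ℕ} (hk : k ≠ 0) (m : ℕ)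
    (f : ℕ → M) :
    ∑ r ∈ (k * m).divisors with k ∣ r, f r = ∑ d ∈ m.divisors, f (k * d) := by
  rw [← image_mul_left_divisors hk, sum_image (mul_right_injective₀ hk).injOn]

theorem totient_prime_mul_add_ite {p : ℕ} (hp : p.Prime) (d : ℕ) :
    (p * d).totient + (if ¬p ∣ d then d.totient else 0) = p * d.totient := by
  by_cases hpd : p ∣ d
  · rw [if_neg (not_not.2 hpd), add_zero, Nat.totient_mul_of_prime_of_dvd hp hpd]
  · rw [if_pos hpd, Nat.totient_mul_of_prime_of_not_dvd hp hpd, ← Nat.succ_mul, Nat.succ_eq_add_one,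
      Nat.sub_add_cancel hp.one_le]

theorem sum_totient_prime_mul_add_sum_filter {R : Type*} [Semiring R] {p : ℕ} (hp : p.Prime)
    (s : Finset ℕ) (f : ℕ → R) :
    ∑ d ∈ s, ((p * d).totient : R) * f d + ∑ d ∈ s with ¬p ∣ d, (d.totient : R) * f d =
      p * ∑ d ∈ s, (d.totient : R) * f d := by
  rw [sum_filter, ← sum_add_distrib, mul_sum]
  refine sum_congr rfl fun d _ => ?_
  rw [← mul_assoc, ← Nat.cast_mul, ← totient_prime_mul_add_ite hp d, Nat.cast_add, add_mul,
    Nat.cast_ite, Nat.cast_zero, ite_mul, zero_mul]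

theorem cycleIndex_ite (n : ℕ) (P : ℕ → Prop) [DecidablePred P] (x : ℕ → ℚ) :
    cycleIndex n (fun r => if P r then x r else 0) =
      (1 / (n : ℚ)) * ∑ r ∈ n.divisors with P r, (r.totient : ℚ) * x r ^ (n / r) := by
  rw [cycleIndex, sum_filter]
  congr 1
  refine sum_congr rfl fun r hr => ?_
  have hexp : n / r ≠ 0 := (Nat.div_pos (Nat.divisor_le hr) (Nat.pos_of_mem_divisors hr)).ne'
  rw [ite_pow, zero_pow hexp, mul_ite, mul_zero]

theorem cycleIndex_mul_ite_dvd {k : ℕ} (hk : k ≠ 0) (m : ℕ) (x : ℕ → ℚ) :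
    cycleIndex (k * m) (fun r => if k ∣ r then x (r / k) else 0) =
      (1 / ((k : ℚ) * m)) * ∑ d ∈ m.divisors, ((k * d).totient : ℚ) * x d ^ (m / d) := by
  have hk_pos : 0 < k := Nat.pos_of_ne_zero hk
  rw [cycleIndex_ite (k * m) (k ∣ ·) fun r => x (r / k), sum_divisors_mul_filter_dvd hk]
  simp only [Nat.cast_mul, Nat.mul_div_cancel_left _ hk_pos, Nat.mul_div_mul_left _ _ hk_pos]

theorem cycleIndex_eq_cycleIndex_two_mul_add_half_general {p : ℕ} (hp : p.Prime) {m : ℕ}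
    (hm : 0 < m) (x : ℕ → ℚ) :
    cycleIndex m x =
      cycleIndex (p * m) (fun r => if p ∣ r then x (r / p) else 0) +
        (1 / (p : ℚ)) * cycleIndex m (fun r => if ¬p ∣ r then x r else 0) := by
  have hp_ne : (p : ℚ) ≠ 0 := Nat.cast_ne_zero.2 hp.ne_zero
  have hm_ne : (m : ℚ) ≠ 0 := Nat.cast_ne_zero.2 hm.ne'
  rw [cycleIndex_mul_ite_dvd hp.ne_zero, cycleIndex_ite m (¬p ∣ ·), cycleIndex]
  have hsum := sum_totient_prime_mul_add_sum_filter hp m.divisors fun d => x d ^ (m / d)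
  field_simp
  linear_combination -hsum

/-- `I_m(x) = I_{2m}(y) + (1/2)·I_m(z)`, where `y(r) = 0` for odd `r`,
`y(r) = x(r/2)` for even `r`; `z(r) = x(r)` for odd `r`, `z(r) = 0` for even `r`. -/
theorem cycleIndex_eq_cycleIndex_two_mul_add_half (m : ℕ) (hm : 0 < m) (x : ℕ → ℚ) :
    cycleIndex m x =
      cycleIndex (2 * m) (fun r => if Odd r then 0 else x (r / 2)) +
        (1 / 2) * cycleIndex m (fun r => if Odd r then x r else 0) := by
  simpa only [← Nat.not_even_iff_odd, even_iff_two_dvd, ite_not, Nat.cast_ofNat] using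
    cycleIndex_eq_cycleIndex_two_mul_add_half_general Nat.prime_two hm x
end

section
/- For every odd prime p, 2·C_sd(p) = C_u(p) + C_su(p); that is, twice the number of self-complementary directed circulant graphs of prime order p equals the number of undirected circulant graphs of order p plus the number of self-complementary undirected circulant graphs of order p. -/
open Finset

/-- Number of self-complementary directed circulant graphs of odd prime order `p`:
`C_sd(p) = (1/(p-1))·∑_{r | p-1, r even} φ(r)·2^{(p-1)/r}`. -/
def Csd (p : ℕ) : ℚ :=
  (1 / ((p : ℚ) - 1)) *
    ∑ r ∈ (p - 1).divisors.filter (fun r => Even r),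
      (Nat.totient r : ℚ) * (2 : ℚ) ^ ((p - 1) / r)

/-- Number of self-complementary undirected circulant graphs of odd prime order `p`:
`C_su(p) = (2/(p-1))·∑_{r | (p-1)/2, r even} φ(r)·2^{(p-1)/(2r)}`. -/
def Csu (p : ℕ) : ℚ :=
  (2 / ((p : ℚ) - 1)) *
    ∑ r ∈ ((p - 1) / 2).divisors.filter (fun r => Even r),
      (Nat.totient r : ℚ) * (2 : ℚ) ^ ((p - 1) / (2 * r))

/-- Number of undirected circulant graphs of odd prime order `p`:
`C_u(p) = (2/(p-1))·∑_{r | (p-1)/2} φ(r)·2^{(p-1)/(2r)}`. -/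
def Cu (p : ℕ) : ℚ :=
  (2 / ((p : ℚ) - 1)) *
    ∑ r ∈ ((p - 1) / 2).divisors,
      (Nat.totient r : ℚ) * (2 : ℚ) ^ ((p - 1) / (2 * r))

/-!
The even divisors of `2 * m` are the doubles `2 * d` of the divisors `d` of `m`, and `φ (2 * d)` is
`φ d` for odd `d` and `2 * φ d` for even `d`. Hence, for `p = 2 * m + 1`, the sum in `Csd p` takes
the term `φ d * 2 ^ (m / d)` once for each divisor `d` of `m`, which is the sum in `Cu p`, and a
second time for each even `d`, which is the sum in `Csu p`.
-/

theorem filter_dvd_divisors_mul {k : ℕ} (hk : k ≠ 0) (m : ℕ) :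
    {r ∈ (k * m).divisors | k ∣ r} = m.divisors.image (k * ·) := by
  ext r
  simp only [mem_filter, Nat.mem_divisors, mem_image]
  constructor
  · rintro ⟨⟨hdvd, hkm⟩, d, rfl⟩
    exact ⟨d, ⟨Nat.dvd_of_mul_dvd_mul_left (Nat.pos_of_ne_zero hk) hdvd,
      right_ne_zero_of_mul hkm⟩, rfl⟩
  · rintro ⟨d, ⟨hdvd, hm⟩, rfl⟩
    exact ⟨⟨Nat.mul_dvd_mul_left k hdvd, mul_ne_zero hk hm⟩, dvd_mul_right k d⟩

theorem totient_prime_mul {q : ℕ} (hq : q.Prime) (d : ℕ) :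
    (q * d).totient = (q - 1) * d.totient + if q ∣ d then d.totient else 0 := by
  split_ifs with hd
  · rw [Nat.totient_mul_of_prime_of_dvd hq hd, ← add_one_mul, Nat.sub_add_cancel hq.one_le]
  · rw [Nat.totient_mul_of_prime_of_not_dvd hq hd, add_zero]

section AddCommMonoid

variable {M : Type*} [AddCommMonoid M]

theorem sum_filter_dvd_divisors_mul {k : ℕ} (hk : k ≠ 0) (m : ℕ) (f : ℕ → M) :
    ∑ r ∈ (k * m).divisors with k ∣ r, f r = ∑ d ∈ m.divisors, f (k * d) := by
  rw [filter_dvd_divisors_mul hk, sum_image (mul_right_injective₀ hk).injOn]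

theorem sum_totient_nsmul_filter_dvd_divisors_prime_mul {q : ℕ} (hq : q.Prime) (m : ℕ)
    (f : ℕ → M) :
    ∑ r ∈ (q * m).divisors with q ∣ r, r.totient • f r =
      (q - 1) • ∑ d ∈ m.divisors, d.totient • f (q * d) +
        ∑ d ∈ m.divisors with q ∣ d, d.totient • f (q * d) := by
  rw [sum_filter_dvd_divisors_mul hq.ne_zero]
  simp only [totient_prime_mul hq, add_nsmul, mul_nsmul', ite_smul, zero_nsmul, sum_add_distrib,
    smul_sum, sum_filter]

end AddCommMonoid

theorem sum_totient_mul_filter_even_divisors_two_mul {R : Type*} [NonAssocSemiring R] (m : ℕ)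
    (f : ℕ → R) :
    ∑ r ∈ (2 * m).divisors with Even r, (r.totient : R) * f r =
      ∑ d ∈ m.divisors, (d.totient : R) * f (2 * d) +
        ∑ d ∈ m.divisors with Even d, (d.totient : R) * f (2 * d) := by
  simpa only [even_iff_two_dvd, nsmul_eq_mul, Nat.add_one_sub_one, Nat.cast_one, one_mul] using
    sum_totient_nsmul_filter_dvd_divisors_prime_mul Nat.prime_two m f

theorem two_mul_Csd_eq_Cu_add_Csu_general {p : ℕ} (hodd : Odd p) (hp : p ≠ 1) :
    2 * Csd p = Cu p + Csu p := by
  obtain ⟨m, rfl⟩ := hodd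
  have hden : ((2 * m + 1 : ℕ) : ℚ) - 1 ≠ 0 := sub_ne_zero.mpr (Nat.cast_ne_one.mpr hp)
  simp only [Csd, Cu, Csu, Nat.add_sub_cancel, Nat.mul_div_cancel_left m two_pos]
  rw [sum_totient_mul_filter_even_divisors_two_mul m fun r => (2 : ℚ) ^ (2 * m / r)]
  field_simp

/-- For every odd prime `p`, `2·C_sd(p) = C_u(p) + C_su(p)`. -/
theorem two_mul_Csd_eq_Cu_add_Csu (p : ℕ) (hp : p.Prime) (hodd : Odd p) :
    2 * Csd p = Cu p + Csu p :=
  two_mul_Csd_eq_Cu_add_Csu_general hodd hp.ne_one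
end

section
/- Let p > 3 be a prime such that q = (p+1)/2 is also prime, and write p − 1 = 2^{k+1}·p̃ with p̃ odd (here k ≥ 1 since 4 divides p − 1). Then for every z ∈ ℚ, 2·(1+z)·c_u(p, z) = c_u(p+1, z) + (1+z)·c̄_u(2p̃+1, z^{2^k}). -/
open Finset

/-- Generating function by valency for undirected circulant graphs of odd prime
order `p`: `c_u(p,z) = (2/(p-1))·∑_{r | (p-1)/2} φ(r)·(1+z^{2r})^{(p-1)/(2r)}`. -/
def cUPrime (p : ℕ) (z : ℚ) : ℚ :=
  (2 / ((p : ℚ) - 1)) *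
    ∑ r ∈ ((p - 1) / 2).divisors,
      (Nat.totient r : ℚ) * (1 + z ^ (2 * r)) ^ ((p - 1) / (2 * r))

/-- Generating function by valency for undirected circulant graphs of order `2q`,
`q` an odd prime:
`c_u(2q,z) = (1+z)·(2/(q-1))·∑_{r | (q-1)/2} φ(r)·(1+z^{2r})^{(q-1)/r}`. -/
def cUTwicePrime (q : ℕ) (z : ℚ) : ℚ :=
  (1 + z) * ((2 / ((q : ℚ) - 1)) *
    ∑ r ∈ ((q - 1) / 2).divisors,
      (Nat.totient r : ℚ) * (1 + z ^ (2 * r)) ^ ((q - 1) / r))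

/-- For odd `p̃`, `c̄_u(2p̃+1, w) = (1/p̃)·∑_{r | p̃} φ(r)·(1+w^{2r})^{p̃/r}`
(the formula counting undirected circulants of order `2p̃+1` when that is prime). -/
def cUBar (pt : ℕ) (w : ℚ) : ℚ :=
  (1 / (pt : ℚ)) *
    ∑ r ∈ pt.divisors, (Nat.totient r : ℚ) * (1 + w ^ (2 * r)) ^ (pt / r)

/-!
Put `n = (p - 1) / 2 = 2 ^ k * p̃`. Then `c_u(p, z)` is `c̄_u(2 * n + 1, z)`, and `c_u(p + 1, z)` is
`2 * (1 + z)` times the same sum, still divided by `n`, restricted to the divisors of `n / 2`.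
The divisors of `n` which do not divide `n / 2` are the `2 ^ k * s` with `s ∣ p̃`; since
`φ(2 ^ k * s) = 2 ^ (k - 1) * φ(s)`, they contribute exactly `c̄_u(2 * p̃ + 1, z ^ 2 ^ k)` to
`2 * c_u(p, z)`.
-/

theorem sum_divisors_mul_of_coprime {M : Type*} [AddCommMonoid M] {m n : ℕ} (hmn : m.Coprime n)
    (f : ℕ → M) :
    ∑ r ∈ (m * n).divisors, f r = ∑ d ∈ m.divisors, ∑ e ∈ n.divisors, f (d * e) := by
  rw [Nat.divisors_mul, Finset.mul_def, sum_image hmn.mul_injOn_divisors, sum_product]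

theorem sum_divisors_prime_pow_succ_mul {M : Type*} [AddCommMonoid M] {p m : ℕ} (hp : p.Prime)
    (hpm : p.Coprime m) (j : ℕ) (f : ℕ → M) :
    ∑ r ∈ (p ^ (j + 1) * m).divisors, f r =
      ∑ r ∈ (p ^ j * m).divisors, f r + ∑ s ∈ m.divisors, f (p ^ (j + 1) * s) := by
  simp only [sum_divisors_mul_of_coprime (hpm.pow_left _), Nat.sum_divisors_prime_pow hp,
    sum_range_succ _ (j + 1)]

theorem totient_prime_pow_succ_mul {p s : ℕ} (hp : p.Prime) (hps : p.Coprime s) (j : ℕ) :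
    Nat.totient (p ^ (j + 1) * s) = p ^ j * (p - 1) * Nat.totient s := by
  rw [Nat.totient_mul (hps.pow_left _), Nat.totient_prime_pow_succ hp]

theorem sum_divisors_prime_pow_succ_mul_totient_mul {R : Type*} [Semiring R] {p m : ℕ}
    (hp : p.Prime) (hpm : p.Coprime m) (j : ℕ) (f : ℕ → R) :
    ∑ r ∈ (p ^ (j + 1) * m).divisors, (Nat.totient r : R) * f r =
      ∑ r ∈ (p ^ j * m).divisors, (Nat.totient r : R) * f r +
        (p ^ j * (p - 1) : ℕ) * ∑ s ∈ m.divisors, (Nat.totient s : R) * f (p ^ (j + 1) * s) := by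
  rw [sum_divisors_prime_pow_succ_mul hp hpm, mul_sum]
  congr 1
  refine sum_congr rfl fun s hs => ?_
  have hps : p.Coprime s := hpm.coprime_dvd_right (Nat.dvd_of_mem_divisors hs)
  rw [totient_prime_pow_succ_mul hp hps, Nat.cast_mul, mul_assoc]

theorem two_div_two_mul_add_one_sub_one (n : ℕ) : (2 : ℚ) / ((2 * n + 1 : ℕ) - 1) = 1 / n := by
  push_cast
  rw [add_sub_cancel_right, div_mul_cancel_left₀ two_ne_zero, one_div]

theorem cUPrime_two_mul_add_one (n : ℕ) (z : ℚ) : cUPrime (2 * n + 1) z = cUBar n z := by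
  simp only [cUPrime, cUBar, two_div_two_mul_add_one_sub_one, Nat.add_sub_cancel,
    Nat.mul_div_mul_left _ _ two_pos, Nat.mul_div_cancel_left n two_pos]

theorem cUTwicePrime_two_mul_add_one (m : ℕ) (z : ℚ) :
    cUTwicePrime (2 * m + 1) z = (1 + z) * (1 / m *
      ∑ r ∈ m.divisors, (Nat.totient r : ℚ) * (1 + z ^ (2 * r)) ^ (2 * m / r)) := by
  simp only [cUTwicePrime, two_div_two_mul_add_one_sub_one, Nat.add_sub_cancel,
    Nat.mul_div_cancel_left m two_pos]

theorem two_mul_cUBar_two_pow_succ_mul {m : ℕ} (hm : Odd m) (j : ℕ) (z : ℚ) :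
    2 * cUBar (2 ^ (j + 1) * m) z =
      1 / (2 ^ j * m : ℕ) * ∑ r ∈ (2 ^ j * m).divisors,
        (Nat.totient r : ℚ) * (1 + z ^ (2 * r)) ^ (2 * (2 ^ j * m) / r) +
      cUBar m (z ^ 2 ^ (j + 1)) := by
  have hm0 : (m : ℚ) ≠ 0 := Nat.cast_ne_zero.mpr hm.pos.ne'
  have hterm (s : ℕ) : (1 + z ^ (2 * (2 ^ (j + 1) * s))) ^ (2 ^ (j + 1) * m / (2 ^ (j + 1) * s)) =
      (1 + (z ^ 2 ^ (j + 1)) ^ (2 * s)) ^ (m / s) := by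
    rw [Nat.mul_div_mul_left _ _ (by positivity), mul_left_comm, pow_mul]
  have hdouble : 2 * (2 ^ j * m) = 2 ^ (j + 1) * m := by ring
  unfold cUBar
  rw [sum_divisors_prime_pow_succ_mul_totient_mul Nat.prime_two (Nat.coprime_two_left.mpr hm),
    hdouble]
  simp only [hterm]
  push_cast
  field_simp
  ring

theorem two_mul_cU_general {p q k pt : ℕ} (hpq : p + 1 = 2 * q) (hk : 1 ≤ k) (hpt : Odd pt)
    (hfac : p - 1 = 2 ^ (k + 1) * pt) (z : ℚ) :
    2 * (1 + z) * cUPrime p z = cUTwicePrime q z + (1 + z) * cUBar pt (z ^ 2 ^ k) := by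
  obtain ⟨j, rfl⟩ : ∃ j, k = j + 1 := Nat.exists_eq_add_of_le' hk
  have hpos : 0 < 2 ^ j * pt := by have := hpt.pos; positivity
  have hn : 2 ^ (j + 1) * pt = 2 * (2 ^ j * pt) := by ring
  have hp : p = 2 * (2 ^ (j + 1) * pt) + 1 := by
    rw [pow_succ', mul_assoc] at hfac
    omega
  have hq : q = 2 * (2 ^ j * pt) + 1 := by omega
  rw [hp, hq, cUPrime_two_mul_add_one, cUTwicePrime_two_mul_add_one, ← mul_add,
    ← two_mul_cUBar_two_pow_succ_mul hpt]
  ring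

/-- If `p > 3` and `q = (p+1)/2` are both prime and `p - 1 = 2^{k+1}·p̃` with `p̃`
odd (`k ≥ 1`), then `2·(1+z)·c_u(p,z) = c_u(p+1,z) + (1+z)·c̄_u(2p̃+1, z^{2^k})`. -/
theorem two_mul_cU (p q k pt : ℕ) (hp : p.Prime) (hp3 : 3 < p)
    (hq : q.Prime) (hpq : p + 1 = 2 * q) (hk : 1 ≤ k) (hpt : Odd pt)
    (hfac : p - 1 = 2 ^ (k + 1) * pt) (z : ℚ) :
    2 * (1 + z) * cUPrime p z = cUTwicePrime q z + (1 + z) * cUBar pt (z ^ 2 ^ k) :=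
  two_mul_cU_general hpq hk hpt hfac z
end
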